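/- arXiv:2205.03723 — 2 statements merged into one kernel-verified Lean document; each statement's English description precedes it below -/
import Mathlib

section
/- If (A, ·, ⋄, ε, α) is a Hom-Novikov-Poisson color Hom-algebra, then (A, ·, [·,·], ε, α) with [x,y] = x⋄y − ε(x,y)y⋄x is a Hom-Gelfand-Dorfman color Hom-algebra. -/
open scoped TensorProduct

section ColorHomDefs

variable {K Γ A V : Type*} [Field K] [AddCommGroup Γ]
variable [AddCommGroup A] [Module K A] [AddCommGroup V] [Module K V]

/-- A commutation factor (skew-symmetric bicharacter) on `Γ` with values in `K`. -/
def IsCommFactor (ε : Γ → Γ → K) : Prop :=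
  (∀ a b, ε a b ≠ 0) ∧ (∀ a b, ε a b * ε b a = 1) ∧
    (∀ a b c, ε a (b + c) = ε a b * ε a c) ∧
    (∀ a b c, ε (a + b) c = ε a c * ε b c)

/-- The (even bilinear) product respects the grading. -/
def GradedMul (𝒜 : Γ → Submodule K A) (μ : A →ₗ[K] A →ₗ[K] A) : Prop :=
  ∀ ⦃γ₁ γ₂ : Γ⦄ ⦃x y : A⦄, x ∈ 𝒜 γ₁ → y ∈ 𝒜 γ₂ → μ x y ∈ 𝒜 (γ₁ + γ₂)

/-- An even linear map. -/
def GradedEnd (𝒜 : Γ → Submodule K A) (f : A →ₗ[K] A) : Prop :=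
  ∀ ⦃γ : Γ⦄ ⦃x : A⦄, x ∈ 𝒜 γ → f x ∈ 𝒜 γ

/-- ε-commutativity on homogeneous elements. -/
def IsEpsComm (𝒜 : Γ → Submodule K A) (ε : Γ → Γ → K) (μ : A →ₗ[K] A →ₗ[K] A) : Prop :=
  ∀ ⦃γ₁ γ₂ : Γ⦄ ⦃x y : A⦄, x ∈ 𝒜 γ₁ → y ∈ 𝒜 γ₂ → μ x y = ε γ₁ γ₂ • μ y x

/-- Hom-associativity on homogeneous elements. -/
def IsHomAssoc (𝒜 : Γ → Submodule K A) (μ : A →ₗ[K] A →ₗ[K] A) (α : A →ₗ[K] A) : Prop :=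
  ∀ ⦃γ₁ γ₂ γ₃ : Γ⦄ ⦃x y z : A⦄, x ∈ 𝒜 γ₁ → y ∈ 𝒜 γ₂ → z ∈ 𝒜 γ₃ →
    μ (μ x y) (α z) = μ (α x) (μ y z)

/-- The two defining identities of a Hom-Novikov color Hom-algebra. -/
def IsHomNovikov (𝒜 : Γ → Submodule K A) (ε : Γ → Γ → K) (μ : A →ₗ[K] A →ₗ[K] A)
    (α : A →ₗ[K] A) : Prop :=
  (∀ ⦃γ₁ γ₂ γ₃ : Γ⦄ ⦃x y z : A⦄, x ∈ 𝒜 γ₁ → y ∈ 𝒜 γ₂ → z ∈ 𝒜 γ₃ →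
      μ (μ x y) (α z) - μ (α x) (μ y z)
        = ε γ₁ γ₂ • (μ (μ y x) (α z) - μ (α y) (μ x z))) ∧
  (∀ ⦃γ₁ γ₂ γ₃ : Γ⦄ ⦃x y z : A⦄, x ∈ 𝒜 γ₁ → y ∈ 𝒜 γ₂ → z ∈ 𝒜 γ₃ →
      μ (μ x y) (α z) = ε γ₂ γ₃ • μ (μ x z) (α y))

/-- ε-skew-symmetry and the ε-Hom-Jacobi identity for a bilinear bracket. -/
def IsHomLie (𝒜 : Γ → Submodule K A) (ε : Γ → Γ → K) (br : A →ₗ[K] A →ₗ[K] A)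
    (α : A →ₗ[K] A) : Prop :=
  (∀ ⦃γ₁ γ₂ : Γ⦄ ⦃x y : A⦄, x ∈ 𝒜 γ₁ → y ∈ 𝒜 γ₂ → br x y = -(ε γ₁ γ₂ • br y x)) ∧
  (∀ ⦃γ₁ γ₂ γ₃ : Γ⦄ ⦃x y z : A⦄, x ∈ 𝒜 γ₁ → y ∈ 𝒜 γ₂ → z ∈ 𝒜 γ₃ →
      ε γ₃ γ₁ • br (α x) (br y z) + ε γ₁ γ₂ • br (α y) (br z x)
        + ε γ₂ γ₃ • br (α z) (br x y) = 0)

/-- Compatibility conditions of a Hom-Novikov-Poisson color Hom-algebra. -/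
def HNPCompat (𝒜 : Γ → Submodule K A) (ε : Γ → Γ → K) (μ d : A →ₗ[K] A →ₗ[K] A)
    (α : A →ₗ[K] A) : Prop :=
  (∀ ⦃γ₁ γ₂ γ₃ : Γ⦄ ⦃x y z : A⦄, x ∈ 𝒜 γ₁ → y ∈ 𝒜 γ₂ → z ∈ 𝒜 γ₃ →
      d (μ x y) (α z) = ε γ₂ γ₃ • μ (d x z) (α y)) ∧
  (∀ ⦃γ₁ γ₂ γ₃ : Γ⦄ ⦃x y z : A⦄, x ∈ 𝒜 γ₁ → y ∈ 𝒜 γ₂ → z ∈ 𝒜 γ₃ →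
      μ (d x y) (α z) - d (α x) (μ y z)
        = ε γ₁ γ₂ • (μ (d y x) (α z) - d (α y) (μ x z)))

/-- Hom-Novikov-Poisson color Hom-algebra: `μ` is the ε-commutative Hom-associative
product, `d` the Hom-Novikov product. -/
def IsHNP (𝒜 : Γ → Submodule K A) (ε : Γ → Γ → K) (μ d : A →ₗ[K] A →ₗ[K] A)
    (α : A →ₗ[K] A) : Prop :=
  GradedMul 𝒜 μ ∧ GradedMul 𝒜 d ∧ GradedEnd 𝒜 α ∧
    IsEpsComm 𝒜 ε μ ∧ IsHomAssoc 𝒜 μ α ∧ IsHomNovikov 𝒜 ε d α ∧ HNPCompat 𝒜 ε μ d α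

/-- Admissibility: the left Hom-associator mixing the two products vanishes. -/
def IsAdmissibleHNP (𝒜 : Γ → Submodule K A) (ε : Γ → Γ → K) (μ d : A →ₗ[K] A →ₗ[K] A)
    (α : A →ₗ[K] A) : Prop :=
  IsHNP 𝒜 ε μ d α ∧
    ∀ ⦃γ₁ γ₂ γ₃ : Γ⦄ ⦃x y z : A⦄, x ∈ 𝒜 γ₁ → y ∈ 𝒜 γ₂ → z ∈ 𝒜 γ₃ →
      d (μ x y) (α z) = d (α x) (μ y z)

/-- Gelfand-Dorfman compatibility for a bilinear bracket. -/
def GDCompat (𝒜 : Γ → Submodule K A) (ε : Γ → Γ → K) (μ br : A →ₗ[K] A →ₗ[K] A)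
    (α : A →ₗ[K] A) : Prop :=
  ∀ ⦃γ₁ γ₂ γ₃ : Γ⦄ ⦃x y z : A⦄, x ∈ 𝒜 γ₁ → y ∈ 𝒜 γ₂ → z ∈ 𝒜 γ₃ →
    μ (α y) (br x z)
      = ε γ₂ γ₁ • br (α x) (μ y z) - ε (γ₁ + γ₂) γ₃ • br (α z) (μ y x)
        + μ (br y x) (α z) - ε γ₁ γ₃ • μ (br y z) (α x)

/-- The transposed Hom-ε-Leibniz identity. -/
def TransposedLeibniz (𝒜 : Γ → Submodule K A) (ε : Γ → Γ → K) (μ br : A →ₗ[K] A →ₗ[K] A)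
    (α : A →ₗ[K] A) : Prop :=
  ∀ ⦃γ₁ γ₂ γ₃ : Γ⦄ ⦃x y z : A⦄, x ∈ 𝒜 γ₁ → y ∈ 𝒜 γ₂ → z ∈ 𝒜 γ₃ →
    (2 : K) • μ (α z) (br x y) = br (μ z x) (α y) + ε γ₃ γ₁ • br (α x) (μ z y)

/-- The ε-commutator bracket of homogeneous elements of degrees `γ`, `δ`. -/
def brkt (ε : Γ → Γ → K) (μ : A →ₗ[K] A →ₗ[K] A) (γ δ : Γ) (x y : A) : A :=
  μ x y - ε γ δ • μ y x

/-- The Yau twist `x ∗ y = α (μ x y)` of a bilinear product. -/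
def twistMul (α : A →ₗ[K] A) (μ : A →ₗ[K] A →ₗ[K] A) : A →ₗ[K] A →ₗ[K] A :=
  (LinearMap.llcomp K A A A α).comp μ

/-- The product `x ⋄ y = μ x (D y)`. -/
def precompMul (D : A →ₗ[K] A) (μ : A →ₗ[K] A →ₗ[K] A) : A →ₗ[K] A →ₗ[K] A :=
  (LinearMap.lcomp K A D).comp μ

/-- Semidirect product of an ε-commutative Hom-associative color Hom-algebra with a
bimodule, on homogeneous elements of degrees `γ₁`, `γ₂`. -/
def sdDot (ε : Γ → Γ → K) (μ : A →ₗ[K] A →ₗ[K] A) (s : A →ₗ[K] V →ₗ[K] V)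
    (γ₁ γ₂ : Γ) (X Y : A × V) : A × V :=
  (μ X.1 Y.1, s X.1 Y.2 + ε γ₁ γ₂ • s Y.1 X.2)

/-- Semidirect product of a Hom-Novikov color Hom-algebra with a bimodule. -/
def sdDiam (μ : A →ₗ[K] A →ₗ[K] A) (l r : A →ₗ[K] V →ₗ[K] V) (X Y : A × V) : A × V :=
  (μ X.1 Y.1, l X.1 Y.2 + r Y.1 X.2)

/-- Semidirect product bracket of a Hom-Lie color Hom-algebra with a representation. -/
def sdBr (ε : Γ → Γ → K) (br : A →ₗ[K] A →ₗ[K] A) (ρ : A →ₗ[K] V →ₗ[K] V)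
    (γ₁ γ₂ : Γ) (X Y : A × V) : A × V :=
  (br X.1 Y.1, ρ X.1 Y.2 - ε γ₁ γ₂ • ρ Y.1 X.2)

/-- The twisting map `α ⊕ β` on `A × V`. -/
def sdEnd (α : A →ₗ[K] A) (β : V →ₗ[K] V) (X : A × V) : A × V := (α X.1, β X.2)

end ColorHomDefs

/-- a Hom-Novikov-Poisson color Hom-algebra together with the
ε-commutator of its Novikov product is a Hom-Gelfand-Dorfman color Hom-algebra. -/
theorem homNovikovPoisson_to_homGelfandDorfman
    {K Γ A : Type*} [Field K] [AddCommGroup Γ] [AddCommGroup A] [Module K A]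
    (𝒜 : Γ → Submodule K A) (ε : Γ → Γ → K)
    (μ d : A →ₗ[K] A →ₗ[K] A) (α : A →ₗ[K] A)
    (hε : IsCommFactor ε) (hHNP : IsHNP 𝒜 ε μ d α) :
    IsHomNovikov 𝒜 ε μ α ∧
    (∀ ⦃γ₁ γ₂ : Γ⦄ ⦃x y : A⦄, x ∈ 𝒜 γ₁ → y ∈ 𝒜 γ₂ →
        brkt ε d γ₁ γ₂ x y = -(ε γ₁ γ₂ • brkt ε d γ₂ γ₁ y x)) ∧
    (∀ ⦃γ₁ γ₂ γ₃ : Γ⦄ ⦃x y z : A⦄, x ∈ 𝒜 γ₁ → y ∈ 𝒜 γ₂ → z ∈ 𝒜 γ₃ →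
        ε γ₃ γ₁ • brkt ε d γ₁ (γ₂ + γ₃) (α x) (brkt ε d γ₂ γ₃ y z)
          + ε γ₁ γ₂ • brkt ε d γ₂ (γ₃ + γ₁) (α y) (brkt ε d γ₃ γ₁ z x)
          + ε γ₂ γ₃ • brkt ε d γ₃ (γ₁ + γ₂) (α z) (brkt ε d γ₁ γ₂ x y) = 0) ∧
    (∀ ⦃γ₁ γ₂ γ₃ : Γ⦄ ⦃x y z : A⦄, x ∈ 𝒜 γ₁ → y ∈ 𝒜 γ₂ → z ∈ 𝒜 γ₃ →
        μ (α y) (brkt ε d γ₁ γ₃ x z)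
          = ε γ₂ γ₁ • brkt ε d γ₁ (γ₂ + γ₃) (α x) (μ y z)
            - ε (γ₁ + γ₂) γ₃ • brkt ε d γ₃ (γ₂ + γ₁) (α z) (μ y x)
            + μ (brkt ε d γ₂ γ₁ y x) (α z)
            - ε γ₁ γ₃ • μ (brkt ε d γ₂ γ₃ y z) (α x)) := by
  obtain ⟨h0, hinv, hr, hl⟩ := hε
  obtain ⟨gμ, gd, gα, hc, ha, ⟨hn1, -⟩, hp1, hp2⟩ := hHNP
  have e : ∀ a b, ε b a = (ε a b)⁻¹ := fun a b =>
    eq_inv_of_mul_eq_one_left (hinv b a)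
  refine ⟨⟨?_, ?_⟩, ?_, ?_, ?_⟩
  · intro a b c x y z hx hy hz
    rw [ha hx hy hz, ha hy hx hz, sub_self, sub_self, smul_zero]
  · intro a b c x y z hx hy hz
    rw [ha hx hy hz, ha hx hz hy, hc hy hz, map_smul]
  · intro a b x y hx hy
    unfold brkt
    rw [smul_sub, smul_smul, hinv, one_smul, neg_sub]
  · intro a b c x y z hx hy hz
    have h1 := hn1 hy hz hx
    have h2 := hn1 hz hx hy
    have h3 := hn1 hx hy hz
    have p0 := h0 a b
    have q0 := h0 b c
    have r0 := h0 c a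
    simp only [brkt, hr, map_sub, map_smul, LinearMap.sub_apply, LinearMap.smul_apply]
    simp only [e a b, e b c, e c a] at h1 h2 h3 ⊢
    linear_combination (norm := skip) (-ε a b) • h1 + (-ε b c) • h2 + (-ε c a) • h3
    match_scalars <;> field_simp <;> ring
  · intro a b c x y z hx hy hz
    have h1 := hp2 hx hz hy
    have h2 := hp1 hz hx hy
    have h3 := hp1 hx hz hy
    rw [hc hz hx, map_smul, LinearMap.smul_apply, h3] at h2
    have p0 := h0 a b
    have q0 := h0 b c
    have r0 := h0 c a
    simp only [brkt, map_sub, map_smul, LinearMap.sub_apply, LinearMap.smul_apply]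
    rw [hc (gα hy) (gd hx hz), hc (gα hy) (gd hz hx), hp1 hy hz hx, hp1 hy hx hz,
      hc hy hz, hc hy hx]
    simp only [hr, hl, map_smul]
    simp only [e a b, e b c, e c a] at h1 h2 h3 ⊢
    linear_combination (norm := skip) ((ε a b)⁻¹ * ε b c) • h1
      + ((ε a b)⁻¹ * ε b c * (ε c a)⁻¹) • h2
    match_scalars <;> field_simp <;> ring
end

section
/- If (A, ·, [·,·], ε) is a Gelfand-Dorfman color algebra and α: A → A is a morphism preserving both operations, then the Yau twist (A, ·_α, [·,·]_α, ε, α) with x·_α y = α(x·y) and [x,y]_α = α([x,y]) is a Hom-Gelfand-Dorfman color Hom-algebra. Moreover, if f: A → A' is a morphism of Gelfand-Dorfman color algebras with f∘α = α'∘f for a morphism α' of A', then f: A_α → A'_{α'} is a morphism of the Yau twists. -/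
open scoped TensorProduct

/-- the Yau twist of a Gelfand-Dorfman color algebra along a morphism
`α` is a Hom-Gelfand-Dorfman color Hom-algebra; moreover a morphism `f` of
Gelfand-Dorfman color algebras intertwining the twisting morphisms is a morphism of
the Yau twists. -/
theorem yauTwist_gelfandDorfman
    {K Γ A A' : Type*} [Field K] [AddCommGroup Γ]
    [AddCommGroup A] [Module K A] [AddCommGroup A'] [Module K A']
    (𝒜 : Γ → Submodule K A) (𝒜' : Γ → Submodule K A') (ε : Γ → Γ → K)
    (μ br : A →ₗ[K] A →ₗ[K] A) (α : A →ₗ[K] A)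
    (μ' br' : A' →ₗ[K] A' →ₗ[K] A') (α' : A' →ₗ[K] A') (f : A →ₗ[K] A')
    (hε : IsCommFactor ε)
    (hμ : GradedMul 𝒜 μ) (hbr : GradedMul 𝒜 br)
    (hNov : IsHomNovikov 𝒜 ε μ (LinearMap.id))
    (hLie : IsHomLie 𝒜 ε br (LinearMap.id))
    (hGD : GDCompat 𝒜 ε μ br (LinearMap.id))
    (hα : GradedEnd 𝒜 α)
    (hαμ : ∀ x y : A, α (μ x y) = μ (α x) (α y))
    (hαbr : ∀ x y : A, α (br x y) = br (α x) (α y))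
    (hα'μ : ∀ x y : A', α' (μ' x y) = μ' (α' x) (α' y))
    (hα'br : ∀ x y : A', α' (br' x y) = br' (α' x) (α' y))
    (hf : ∀ ⦃γ : Γ⦄ ⦃x : A⦄, x ∈ 𝒜 γ → f x ∈ 𝒜' γ)
    (hfμ : ∀ x y : A, f (μ x y) = μ' (f x) (f y))
    (hfbr : ∀ x y : A, f (br x y) = br' (f x) (f y))
    (hfα : ∀ x : A, f (α x) = α' (f x)) :
    (GradedMul 𝒜 (twistMul α μ) ∧ GradedMul 𝒜 (twistMul α br) ∧
     IsHomNovikov 𝒜 ε (twistMul α μ) α ∧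
     IsHomLie 𝒜 ε (twistMul α br) α ∧
     GDCompat 𝒜 ε (twistMul α μ) (twistMul α br) α) ∧
    (∀ x y : A,
      f (twistMul α μ x y) = twistMul α' μ' (f x) (f y) ∧
      f (twistMul α br x y) = twistMul α' br' (f x) (f y)) := by
  have tw : ∀ (ν : A →ₗ[K] A →ₗ[K] A) (x y : A), twistMul α ν x y = α (ν x y) :=
    fun _ _ _ => rfl
  have tw' : ∀ (ν : A' →ₗ[K] A' →ₗ[K] A') (x y : A'), twistMul α' ν x y = α' (ν x y) :=
    fun _ _ _ => rfl
  refine ⟨⟨?_, ?_, ⟨?_, ?_⟩, ⟨?_, ?_⟩, ?_⟩, ?_⟩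
  · intro a b x y hx hy
    exact hα (hμ hx hy)
  · intro a b x y hx hy
    exact hα (hbr hx hy)
  · intro a b c x y z hx hy hz
    have h := hNov.1 (hα (hα hx)) (hα (hα hy)) (hα (hα hz))
    simpa only [tw, hαμ, LinearMap.id_apply] using h
  · intro a b c x y z hx hy hz
    have h := hNov.2 (hα (hα hx)) (hα (hα hy)) (hα (hα hz))
    simpa only [tw, hαμ, LinearMap.id_apply] using h
  · intro a b x y hx hy
    have h := hLie.1 (hα hx) (hα hy)
    simpa only [tw, hαbr] using h
  · intro a b c x y z hx hy hz
    have h := hLie.2 (hα (hα hx)) (hα (hα hy)) (hα (hα hz))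
    simpa only [tw, hαbr, LinearMap.id_apply] using h
  · intro a b c x y z hx hy hz
    have h := hGD (hα (hα hx)) (hα (hα hy)) (hα (hα hz))
    simpa only [tw, hαμ, hαbr, LinearMap.id_apply] using h
  · intro x y
    simp only [tw, tw', hfα, hfμ, hfbr, and_self]
end
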